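/- Let s > 0, D > 0 and let (H_n)_{n≥0} be a sequence of nonnegative real numbers satisfying, for all n ≥ 1, the recurrence H_{n+2} = ( n/((n+2)s) + D/(n+2) )·H_{n+1} + ( D/((n+2)(n+1)) )·H_n. Then for every real u with |u| < s, the series Σ_{n=0}^∞ H_n |u|ⁿ converges. -/

import Mathlib

/-- Any nonnegative sequence satisfying the second order recurrence gives a power series
with radius of convergence at least `s`. -/
theorem majorizing_sequence_power_series_converges
    (s D : ℝ) (hs : 0 < s) (hD : 0 < D)
    (H : ℕ → ℝ) (hHnonneg : ∀ n : ℕ, 0 ≤ H n)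
    (hHrec : ∀ n : ℕ, 1 ≤ n →
      H (n + 2) = ((n : ℝ) / (((n : ℝ) + 2) * s) + D / ((n : ℝ) + 2)) * H (n + 1)
        + D / (((n : ℝ) + 2) * ((n : ℝ) + 1)) * H n) :
    ∀ u : ℝ, |u| < s → Summable (fun n : ℕ => H n * |u| ^ n) := by
  intro u hu
  have hu0 := abs_nonneg u
  obtain ⟨r, hr1, hr2⟩ := exists_between hu
  have hr : 0 < r := lt_of_le_of_lt hu0 hr1
  have hrs : 0 < 1 - r / s := by
    rw [sub_pos, div_lt_one hs]; exact hr2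
  obtain ⟨N, hN⟩ := exists_nat_ge ((D * r + D * r ^ 2) / (1 - r / s))
  have key : ∀ n : ℕ, N ≤ n →
      ((n : ℝ) / (((n : ℝ) + 2) * s) + D / ((n : ℝ) + 2)) * r
        + D / (((n : ℝ) + 2) * ((n : ℝ) + 1)) * r ^ 2 ≤ 1 := by
    intro n hn
    have hn' : (N : ℝ) ≤ n := by exact_mod_cast hn
    have hn0 : (0 : ℝ) ≤ n := Nat.cast_nonneg n
    have h1 : D * r + D * r ^ 2 ≤ ((n : ℝ) + 2) * (1 - r / s) := by
      rw [div_le_iff₀ hrs] at hN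
      nlinarith
    have h2 : (n : ℝ) / (((n : ℝ) + 2) * s) ≤ 1 / s := by
      rw [div_le_div_iff₀ (by positivity) hs]; nlinarith
    have h3 : D / (((n : ℝ) + 2) * ((n : ℝ) + 1)) ≤ D / ((n : ℝ) + 2) := by
      apply div_le_div_of_nonneg_left hD.le (by positivity)
      nlinarith
    have h4 : (D * r + D * r ^ 2) / ((n : ℝ) + 2) ≤ 1 - r / s := by
      rw [div_le_iff₀ (by positivity)]; linarith
    calc _ ≤ (1 / s + D / ((n : ℝ) + 2)) * r + D / ((n : ℝ) + 2) * r ^ 2 := by gcongr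
      _ = r / s + (D * r + D * r ^ 2) / ((n : ℝ) + 2) := by ring
      _ ≤ 1 := by linarith
  obtain ⟨C, hC0, hC1⟩ : ∃ C, H (N + 1) * r ^ (N + 1) ≤ C ∧ H (N + 2) * r ^ (N + 2) ≤ C :=
    ⟨_, le_max_left _ _, le_max_right _ _⟩
  have bd : ∀ n : ℕ, H (n + (N + 1)) * r ^ (n + (N + 1)) ≤ C ∧
      H (n + (N + 1) + 1) * r ^ (n + (N + 1) + 1) ≤ C := by
    intro n
    induction n with
    | zero => simpa using ⟨hC0, hC1⟩
    | succ k ih =>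
      obtain ⟨i0, i1⟩ := ih
      have e : k + 1 + (N + 1) = k + (N + 1) + 1 := by ring
      rw [e]
      refine ⟨i1, ?_⟩
      have hk := key (k + (N + 1)) (by omega)
      have hrc := hHrec (k + (N + 1)) (by omega)
      generalize k + (N + 1) = m at *
      have hC : 0 ≤ C := le_trans (mul_nonneg (hHnonneg _) (by positivity)) i0
      show H (m + 2) * r ^ (m + 2) ≤ C
      rw [hrc]
      have ha : 0 ≤ ((m : ℝ) / (((m : ℝ) + 2) * s) + D / ((m : ℝ) + 2)) * r := by positivity
      have hb : 0 ≤ D / (((m : ℝ) + 2) * ((m : ℝ) + 1)) * r ^ 2 := by positivity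
      have j1 := mul_le_mul_of_nonneg_left i1 ha
      have j0 := mul_le_mul_of_nonneg_left i0 hb
      have j2 := mul_le_mul_of_nonneg_right hk hC
      calc _ = ((m : ℝ) / (((m : ℝ) + 2) * s) + D / ((m : ℝ) + 2)) * r
              * (H (m + 1) * r ^ (m + 1))
            + D / (((m : ℝ) + 2) * ((m : ℝ) + 1)) * r ^ 2 * (H m * r ^ m) := by ring
        _ ≤ C := by linarith
  rw [← summable_nat_add_iff (N + 1)]
  have hq : |u| / r < 1 := (div_lt_one hr).2 hr1
  have hgeo : Summable (fun n : ℕ => C * (|u| / r) ^ (n + (N + 1))) :=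
    ((summable_nat_add_iff (N + 1)).2
      (summable_geometric_of_lt_one (by positivity) hq)).mul_left C
  refine Summable.of_nonneg_of_le (fun n => mul_nonneg (hHnonneg _) (by positivity)) ?_ hgeo
  intro n
  have := mul_le_mul_of_nonneg_right (bd n).1
    (show 0 ≤ (|u| / r) ^ (n + (N + 1)) by positivity)
  refine le_trans (le_of_eq ?_) this
  rw [mul_assoc, ← mul_pow, mul_div_cancel₀ _ hr.ne']
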